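/- Let (X, f) be a dynamical system, where X is a compact uniform space and f : X → X is a continuous surjection, and let D be an entourage. Then the equivalence relation ∼_D on CR(f), defined by x ∼_D y if there is a D-chain from x to y contained in CR(f), has only finitely many equivalence classes, and each equivalence class is a clopen subset of CR(f) (with the subspace topology). -/

import Mathlib

open Filter Set Function

section Defs

variable {X : Type*} [UniformSpace X]

/-- A `D`-chain from `x` to `y`: a finite sequence `x = c 0, c 1, …, c n` (`n ≥ 1`)
with `c n = y` and `(f (c i), c (i+1)) ∈ D` for all `i < n`. -/
def DChain (f : X → X) (D : Set (X × X)) (x y : X) : Prop :=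
  ∃ n : ℕ, 1 ≤ n ∧ ∃ c : ℕ → X, c 0 = x ∧ c n = y ∧ ∀ i < n, (f (c i), c (i + 1)) ∈ D

/-- A `D`-chain from `x` to `y` contained in the set `S`. -/
def DChainIn (f : X → X) (D : Set (X × X)) (S : Set X) (x y : X) : Prop :=
  ∃ n : ℕ, 1 ≤ n ∧ ∃ c : ℕ → X, c 0 = x ∧ c n = y ∧ (∀ i ≤ n, c i ∈ S) ∧
    ∀ i < n, (f (c i), c (i + 1)) ∈ D

/-- The set of chain-recurrent points of `f`. -/
def CR (f : X → X) : Set X :=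
  {x | ∀ D ∈ uniformity X, DChain f D x x}

/-- The set of non-wandering points of `f`. -/
def NonWandering (f : X → X) : Set X :=
  {x | ∀ U : Set X, IsOpen U → x ∈ U → ∃ n : ℕ, 1 ≤ n ∧ (f^[n] '' U ∩ U).Nonempty}

/-- `(x i)` is a `D`-pseudo orbit on the set `A ⊆ ℕ`. -/
def PseudoOrbitOn (f : X → X) (D : Set (X × X)) (x : ℕ → X) (A : Set ℕ) : Prop :=
  ∀ i ∈ A, (f (x i), x (i + 1)) ∈ D

/-- `(x i)` is `E`-traced by `y` on the set `B ⊆ ℕ`. -/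
def TracedOn (f : X → X) (E : Set (X × X)) (x : ℕ → X) (y : X) (B : Set ℕ) : Prop :=
  ∀ i ∈ B, (f^[i] y, x i) ∈ E

/-- Topological shadowing. -/
def TopShadowing (f : X → X) : Prop :=
  ∀ E ∈ uniformity X, ∃ D ∈ uniformity X,
    ∀ x : ℕ → X, PseudoOrbitOn f D x Set.univ → ∃ y : X, TracedOn f E x y Set.univ

/-- Topological `(F, G)`-shadowing for families `F`, `G` of subsets of `ℕ`. -/
def FGShadowing (f : X → X) (F G : Set (Set ℕ)) : Prop :=
  ∀ E ∈ uniformity X, ∃ D ∈ uniformity X,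
    ∀ x : ℕ → X, (∃ A ∈ F, PseudoOrbitOn f D x A) →
      ∃ y : X, ∃ B ∈ G, TracedOn f E x y B

end Defs

/-- A set `A ⊆ ℕ` is syndetic: gaps are bounded. -/
def Syndetic (A : Set ℕ) : Prop :=
  ∃ M : ℕ, ∀ k : ℕ, ∃ j ∈ A, k ≤ j ∧ j ≤ k + M

/-- A set `A ⊆ ℕ` is thick: contains arbitrarily long blocks of consecutive numbers. -/
def Thick (A : Set ℕ) : Prop :=
  ∀ n : ℕ, ∃ k : ℕ, ∀ i < n, k + i ∈ A

/-- A set `A ⊆ ℕ` is thickly syndetic. -/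
def ThicklySyndetic (A : Set ℕ) : Prop :=
  ∀ n : ℕ, Syndetic {k : ℕ | ∀ i < n, k + i ∈ A}

/-- A set `A ⊆ ℕ` is piecewise syndetic. -/
def PiecewiseSyndetic (A : Set ℕ) : Prop :=
  ∃ T S : Set ℕ, Thick T ∧ Syndetic S ∧ A = T ∩ S

/-- The family of thick subsets of `ℕ`. -/
def thickFamily : Set (Set ℕ) := {A | Thick A}

/-- The family of piecewise syndetic subsets of `ℕ`. -/
def psFamily : Set (Set ℕ) := {A | PiecewiseSyndetic A}

open scoped Classical in
/-- The lower density of a subset of `ℕ`. -/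
noncomputable def lowerDensity (A : Set ℕ) : ℝ :=
  Filter.atTop.liminf fun n : ℕ => ((Finset.range n).filter (· ∈ A)).card / (n : ℝ)

/-- The family of subsets of `ℕ` of lower density `1`. -/
noncomputable def densityOneFamily : Set (Set ℕ) := {A | lowerDensity A = 1}

section Dyn

variable {X : Type*} [UniformSpace X]

/-- `x` is a minimal point of `f`. -/
def MinimalPt (f : X → X) (x : X) : Prop :=
  ∀ U : Set X, IsOpen U → x ∈ U → Syndetic {n : ℕ | f^[n] x ∈ U}

/-- `(x, y)` is a syndetically proximal pair for `f`. -/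
def SyndProx (f : X → X) (x y : X) : Prop :=
  ∀ E ∈ uniformity X, Syndetic {n : ℕ | (f^[n] x, f^[n] y) ∈ E}

end Dyn

/-- One step of a `D`-chain. -/
def stepR {X : Type*} (f : X → X) (D : Set (X × X)) (a b : X) : Prop := (f a, b) ∈ D

/-- One step of a `D`-chain inside `S`. -/
def stepIn {X : Type*} (f : X → X) (D : Set (X × X)) (S : Set X) (a b : X) : Prop :=
  a ∈ S ∧ b ∈ S ∧ (f a, b) ∈ D

theorem dchainIn_iff {X : Type*} [UniformSpace X] (f : X → X) (D : Set (X × X)) (S : Set X)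
    (x y : X) : DChainIn f D S x y ↔ Relation.TransGen (stepIn f D S) x y := by
  constructor
  · rintro ⟨n, hn, c, h0, h1, hS, hD⟩
    subst h0 h1
    have : ∀ m, m + 1 ≤ n → Relation.TransGen (stepIn f D S) (c 0) (c (m + 1)) := by
      intro m
      induction m with
      | zero => intro h; exact .single ⟨hS 0 (by omega), hS 1 h, hD 0 h⟩
      | succ k ih =>
        intro h
        exact (ih (by omega)).tail ⟨hS _ (by omega), hS _ h, hD _ h⟩
    obtain ⟨m, rfl⟩ : ∃ m, n = m + 1 := ⟨n - 1, by omega⟩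
    exact this m le_rfl
  · intro h
    induction h with
    | single h =>
      rename_i b
      obtain ⟨h1, h2, h3⟩ := h
      refine ⟨1, le_rfl, fun i => if i = 0 then x else b, by simp, by simp, ?_, ?_⟩
      · intro i hi
        by_cases h : i = 0 <;> simp [h, h1, h2]
      · intro i hi
        obtain rfl : i = 0 := by omega
        simpa using h3
    | tail _ h ih =>
      rename_i b d _
      obtain ⟨h1, h2, h3⟩ := h
      obtain ⟨n, hn, c, c0, cn, cS, cD⟩ := ih
      refine ⟨n + 1, by omega, fun i => if i ≤ n then c i else d, by simp [c0], by simp, ?_, ?_⟩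
      · intro i hi
        by_cases h : i ≤ n
        · simpa [h] using cS i h
        · simpa [h] using h2
      · intro i hi
        by_cases h : i < n
        · have h' : i + 1 ≤ n := h
          simpa [h.le, h'] using cD i h
        · obtain rfl : i = n := by omega
          simpa [cn] using h3

theorem dchain_iff {X : Type*} [UniformSpace X] (f : X → X) (D : Set (X × X))
    (x y : X) : DChain f D x y ↔ Relation.TransGen (stepR f D) x y := by
  have h1 : DChain f D x y ↔ DChainIn f D Set.univ x y := by simp [DChain, DChainIn]
  have h2 : stepIn f D Set.univ = stepR f D := by
    funext a b; simp [stepIn, stepR]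
  rw [h1, dchainIn_iff, h2]

/-- Points on `W`-loops. -/
def loopPts {X : Type*} (f : X → X) (W : Set (X × X)) : Set X :=
  {p | Relation.TransGen (stepR f W) p p}

theorem stepR_mono {X : Type*} {f : X → X} {V W : Set (X × X)} (h : V ⊆ W) {a b : X}
    (hab : Relation.TransGen (stepR f V) a b) : Relation.TransGen (stepR f W) a b :=
  Relation.TransGen.mono (fun _ _ h' => h h') _ _ hab

theorem loopPts_near {X : Type*} [UniformSpace X] {f : X → X} (hf : UniformContinuous f)
    {D : Set (X × X)} (hD : D ∈ uniformity X) :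
    ∃ W ∈ uniformity X, ∀ p q, p ∈ loopPts f W → (p, q) ∈ W → q ∈ loopPts f D := by
  obtain ⟨V, hV, hVs, hVD⟩ := comp_symm_mem_uniformity_sets hD
  have hVD' : V ⊆ D := fun p hp => hVD ⟨p.1, refl_mem_uniformity hV, hp⟩
  refine ⟨V ∩ {p | (f p.2, f p.1) ∈ V}, inter_mem hV ?_, ?_⟩
  · exact tendsto_swap_uniformity.comp hf hV
  · intro p q hp hpq
    have hp' : Relation.TransGen (stepR f V) p p := stepR_mono Set.inter_subset_left hp
    have h1 : Relation.TransGen (stepR f D) q p := by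
      obtain ⟨b, hb, hbp⟩ := Relation.TransGen.head'_iff.1 hp'
      refine Relation.TransGen.head' (b := b) (hVD ⟨f p, hpq.2, hb⟩) ?_
      exact Relation.ReflTransGen.mono (fun _ _ h' => hVD' h') _ _ hbp
    have h2 : Relation.TransGen (stepR f D) p q := by
      obtain ⟨b, hb, hbp⟩ := Relation.TransGen.tail'_iff.1 hp'
      refine Relation.TransGen.tail' (b := b) ?_ (hVD ⟨p, hbp, hpq.1⟩)
      exact Relation.ReflTransGen.mono (fun _ _ h' => hVD' h') _ _ hb
    exact h1.trans h2

theorem loopPts_near_CR {X : Type*} [UniformSpace X] [CompactSpace X] {f : X → X}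
    (hf : UniformContinuous f) {E : Set (X × X)} (hE : E ∈ uniformity X) :
    ∃ W ∈ uniformity X, ∀ p ∈ loopPts f W, ∃ q ∈ CR f, (p, q) ∈ E := by
  let B : Set X := {p | ∀ q ∈ CR f, (p, q) ∉ E}
  let F : Filter X := (uniformity X).lift' (loopPts f)
  have hmono : Monotone (loopPts f) := fun _ _ h _ hp => stepR_mono h hp
  by_cases hB : Bᶜ ∈ F
  · obtain ⟨W, hW, hWB⟩ := (Filter.mem_lift'_sets hmono).1 hB
    refine ⟨W, hW, fun p hp => ?_⟩
    have := hWB hp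
    simpa [B] using this
  · exfalso
    have hne : (F ⊓ Filter.principal B).NeBot := by
      refine ⟨fun h => hB ?_⟩
      rw [Filter.inf_principal_eq_bot] at h
      exact h
    obtain ⟨p, hp⟩ := exists_clusterPt_of_compactSpace (F ⊓ Filter.principal B)
    have hpF : ClusterPt p F := hp.mono inf_le_left
    have hpB : ClusterPt p (Filter.principal B) := hp.mono inf_le_right
    have hpCR : p ∈ CR f := by
      intro D hD
      rw [dchain_iff]
      obtain ⟨W, hW, hWD⟩ := loopPts_near hf hD
      obtain ⟨q, hq1, hq2⟩ := (clusterPt_iff_nonempty.1 hpF) (mem_nhds_right p hW)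
        (Filter.mem_lift' (h := loopPts f) hW)
      exact hWD q p hq2 hq1
    obtain ⟨q, hq1, hq2⟩ := (clusterPt_iff_nonempty.1 hpB) (mem_nhds_right p hE)
      (Filter.mem_principal_self B)
    exact hq2 p hpCR hq1

theorem loop_in_CR {X : Type*} [UniformSpace X] [CompactSpace X] {f : X → X}
    (hf : UniformContinuous f) {D : Set (X × X)} (hD : D ∈ uniformity X) {x : X}
    (hx : x ∈ CR f) : Relation.TransGen (stepIn f D (CR f)) x x := by
  classical
  obtain ⟨V, hV, hVs, hVD⟩ := comp_comp_symm_mem_uniformity_sets hD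
  have hE : V ∩ {p | (f p.2, f p.1) ∈ V} ∈ uniformity X :=
    Filter.inter_mem hV (tendsto_swap_uniformity.comp hf hV)
  obtain ⟨W, hW, hWE⟩ := loopPts_near_CR hf hE
  have hW' : W ∩ V ∈ uniformity X := Filter.inter_mem hW hV
  have hr : ∀ p, ∃ q, (p = x → q = x) ∧
      (p ∈ loopPts f (W ∩ V) → q ∈ CR f ∧ (p, q) ∈ V ∧ (f q, f p) ∈ V) := by
    intro p
    by_cases hp : p = x
    · subst hp
      exact ⟨p, fun _ => rfl, fun _ => ⟨hx, refl_mem_uniformity hV, refl_mem_uniformity hV⟩⟩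
    · by_cases hp' : p ∈ loopPts f (W ∩ V)
      · obtain ⟨q, hq, h1, h2⟩ := hWE p (stepR_mono Set.inter_subset_left hp')
        exact ⟨q, fun h => absurd h hp, fun _ => ⟨hq, h1, h2⟩⟩
      · exact ⟨p, fun h => h, fun h => absurd h hp'⟩
  choose r hrx hr using hr
  have hloop : Relation.TransGen (stepR f (W ∩ V)) x x := (dchain_iff _ _ _ _).1 (hx _ hW')
  have main : ∀ b, Relation.TransGen (stepR f (W ∩ V)) x b →
      Relation.TransGen (stepR f (W ∩ V)) b x →
      Relation.TransGen (stepIn f D (CR f)) (r x) (r b) := by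
    have step : ∀ a b, a ∈ loopPts f (W ∩ V) → b ∈ loopPts f (W ∩ V) →
        stepR f (W ∩ V) a b → stepIn f D (CR f) (r a) (r b) := by
      intro a b ha hb hab
      obtain ⟨a1, a2, a3⟩ := hr a ha
      obtain ⟨b1, b2, b3⟩ := hr b hb
      exact ⟨a1, b1, hVD ⟨b, ⟨f a, a3, hab.2⟩, b2⟩⟩
    intro b hxb
    induction hxb with
    | single h => exact fun hb => .single (step _ _ hloop (hb.tail h) h)
    | tail hxc h ih =>
      intro hb
      exact (ih (hb.head h)).tail
        (step _ _ ((hb.head h).trans hxc) (hb.trans (hxc.tail h)) h)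
  have := main x hloop hloop
  rwa [hrx x rfl] at this

/-- the relation ∼_D on CR(f) has finitely many equivalence classes,
each of which is clopen in CR(f) with the subspace topology. -/
theorem chain_relation_classes_finite_clopen
    {X : Type*} [UniformSpace X] [CompactSpace X]
    (f : X → X) (hf : Continuous f) (hsurj : Function.Surjective f)
    (D : Set (X × X)) (hD : D ∈ uniformity X) :
    {C : Set X | ∃ x ∈ CR f, C = {y | DChainIn f D (CR f) x y}}.Finite ∧
    ∀ x ∈ CR f,
      IsClopen ((Subtype.val ⁻¹' {y | DChainIn f D (CR f) x y}) : Set (CR f)) := by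
  have hu : UniformContinuous f := CompactSpace.uniformContinuous_of_continuous hf
  obtain ⟨V, hV, hVs, hVD⟩ := comp_symm_mem_uniformity_sets hD
  have near : ∀ y ∈ CR f, ∀ z ∈ CR f, (y, z) ∈ V →
      Relation.TransGen (stepIn f D (CR f)) y z := by
    intro y hy z hz hyz
    obtain ⟨b, hb, hby⟩ := Relation.TransGen.tail'_iff.1 (loop_in_CR hu hV hy)
    refine Relation.TransGen.tail' (b := b) ?_ ⟨hby.1, hz, hVD ⟨y, hby.2.2, hyz⟩⟩
    exact Relation.ReflTransGen.mono
      (fun _ _ h => ⟨h.1, h.2.1, hVD ⟨_, h.2.2, refl_mem_uniformity hV⟩⟩) _ _ hb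
  have symm : ∀ y z, (y, z) ∈ V → (z, y) ∈ V := fun y z h => hVs.symm y z h
  simp only [dchainIn_iff]
  constructor
  · obtain ⟨W, hW, hWs, hWV⟩ := comp_symm_mem_uniformity_sets hV
    obtain ⟨t, ht, htc⟩ := (isCompact_univ (X := X)).totallyBounded W hW
    have hcov : ∀ x : X, ∃ y ∈ t, (x, y) ∈ W := by
      intro x
      simpa using htc (Set.mem_univ x)
    choose g hgt hgW using hcov
    have hcl : ∀ x ∈ CR f, ∀ y ∈ CR f, g x = g y →
        {z | Relation.TransGen (stepIn f D (CR f)) x z} =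
          {z | Relation.TransGen (stepIn f D (CR f)) y z} := by
      intro x hx y hy hxy
      have h1 : (x, y) ∈ V := hWV ⟨g x, hgW x, hWs.symm _ _ (by rw [hxy]; exact hgW y)⟩
      ext z
      exact ⟨fun h => (near y hy x hx (symm _ _ h1)).trans h,
        fun h => (near x hx y hy h1).trans h⟩
    have hfin : (g '' CR f).Finite := ht.subset (by rintro _ ⟨x, _, rfl⟩; exact hgt x)
    let Φ : X → Set X := fun w =>
      {z | ∃ x ∈ CR f, g x = w ∧ Relation.TransGen (stepIn f D (CR f)) x z}
    refine (hfin.image Φ).subset ?_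
    rintro C ⟨x, hx, rfl⟩
    refine ⟨g x, ⟨x, hx, rfl⟩, ?_⟩
    ext z
    constructor
    · rintro ⟨y, hy, hyx, hz⟩
      rw [hcl x hx y hy hyx.symm]
      exact hz
    · intro hz
      exact ⟨x, hx, rfl, hz⟩
  · intro x hx
    constructor
    · rw [← isOpen_compl_iff, isOpen_iff_mem_nhds]
      intro y hy
      have h1 : {z : CR f | (y.1, z.1) ∈ V} ∈ nhds y :=
        continuous_subtype_val.continuousAt (mem_nhds_left y.1 hV)
      filter_upwards [h1] with z hz hxz
      exact hy (Relation.TransGen.trans hxz (near z z.2 y y.2 (symm _ _ hz)))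
    · rw [isOpen_iff_mem_nhds]
      intro y hy
      have h1 : {z : CR f | (y.1, z.1) ∈ V} ∈ nhds y :=
        continuous_subtype_val.continuousAt (mem_nhds_left y.1 hV)
      filter_upwards [h1] with z hz
      exact Relation.TransGen.trans hy (near y y.2 z z.2 hz)
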